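/- arXiv:1805.02700 — 2 statements merged into one kernel-verified Lean document; each statement's English description precedes it below -/
import Mathlib

section
/- Let X and Y be metric spaces, let D ⊆ X be a domain (a nonempty open connected set), and let f : D → Y be a continuous map which is open (the image of every open subset of D is open in Y), discrete (for every y ∈ Y the preimage f⁻¹(y) consists of isolated points of D), and closed (the image of every set closed in D is closed in f(D)). Then the cluster set C(f, ∂D) := { y ∈ Y : there exist points p_k ∈ D and p ∈ ∂D with p_k → p and f(p_k) → y } is disjoint from f(D); consequently, since f(D) is open, C(f, ∂D) ⊆ ∂ f(D). In other words, an open, discrete and closed map preserves the boundary. -/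
open Filter Topology Set

/-- An open, discrete and closed continuous map `f` of a domain `D` in a metric
space into a metric space preserves the boundary: the cluster set of `f` at
`∂D` is disjoint from `f(D)` and is contained in `∂ f(D)`. -/
theorem cluster_set_of_open_discrete_closed_map {X Y : Type*}
    [MetricSpace X] [MetricSpace Y] (D : Set X)
    (hDopen : IsOpen D) (hDconn : IsConnected D) (f : X → Y)
    (hcont : ContinuousOn f D)
    (hopen : ∀ U : Set X, U ⊆ D → IsOpen U → IsOpen (f '' U))
    (hdiscrete : ∀ y : Y, ∀ x ∈ D, f x = y →
      ∃ U ∈ 𝓝 x, ∀ z ∈ U ∩ D, f z = y → z = x)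
    (hclosed : ∀ C : Set X, C ⊆ D → (∃ C' : Set X, IsClosed C' ∧ C = C' ∩ D) →
      ∃ F : Set Y, IsClosed F ∧ f '' C = F ∩ f '' D) :
    Disjoint
      {y : Y | ∃ p : ℕ → X, (∀ k, p k ∈ D) ∧ ∃ q ∈ frontier D,
        Tendsto p atTop (𝓝 q) ∧ Tendsto (fun k => f (p k)) atTop (𝓝 y)}
      (f '' D) ∧
    {y : Y | ∃ p : ℕ → X, (∀ k, p k ∈ D) ∧ ∃ q ∈ frontier D,
        Tendsto p atTop (𝓝 q) ∧ Tendsto (fun k => f (p k)) atTop (𝓝 y)} ⊆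
      frontier (f '' D) := by
  have key : Disjoint
      {y : Y | ∃ p : ℕ → X, (∀ k, p k ∈ D) ∧ ∃ q ∈ frontier D,
        Tendsto p atTop (𝓝 q) ∧ Tendsto (fun k => f (p k)) atTop (𝓝 y)}
      (f '' D) := by
    rw [Set.disjoint_left]
    rintro y ⟨p, hpD, q, hq, hpq, hfy⟩ hyD
    have hqD : q ∉ D := by
      rw [hDopen.frontier_eq] at hq
      exact hq.2
    have hnt : D.Nontrivial := by
      by_contra h
      rw [Set.not_nontrivial_iff] at h
      have hc : p = fun _ => p 0 := funext fun k => h (hpD k) (hpD 0)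
      rw [hc] at hpq
      have := tendsto_nhds_unique hpq tendsto_const_nhds
      exact hqD (this ▸ hpD 0)
    have hperf := hDconn.isPreconnected.preperfect_of_nontrivial hnt
    have hex : ∀ k : ℕ, ∃ z ∈ D, dist z (p k) < 1 / ((k : ℝ) + 1) ∧
        dist (f z) (f (p k)) < 1 / ((k : ℝ) + 1) ∧ f z ≠ y := by
      intro k
      have hk : (0 : ℝ) < 1 / ((k : ℝ) + 1) := by positivity
      by_cases hy : f (p k) = y
      · obtain ⟨U, hU, hU2⟩ := hdiscrete y (p k) (hpD k) hy
        have hacc := hperf _ (hpD k)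
        rw [accPt_iff_frequently] at hacc
        have hca : ContinuousAt f (p k) := hcont.continuousAt (hDopen.mem_nhds (hpD k))
        have h1 := hca.eventually (Metric.ball_mem_nhds _ hk)
        obtain ⟨z, ⟨hz1, hz2⟩, hzU, hzf, hzb⟩ :=
          (hacc.and_eventually (Filter.Eventually.and hU
            (h1.and (Metric.ball_mem_nhds (p k) hk)))).exists
        exact ⟨z, hz2, hzb, hzf, fun h => hz1 (hU2 z ⟨hzU, hz2⟩ h)⟩
      · exact ⟨p k, hpD k, by simpa using hk, by simpa using hk, hy⟩
    choose z hzD hz1 hz2 hz3 using hex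
    have hlim := tendsto_one_div_add_atTop_nhds_zero_nat (𝕜 := ℝ)
    have hzq : Tendsto z atTop (𝓝 q) := by
      refine (tendsto_iff_of_dist ?_).1 hpq
      refine squeeze_zero (fun _ => dist_nonneg) (fun k => ?_) hlim
      rw [dist_comm]
      exact (hz1 k).le
    have hfzy : Tendsto (fun k => f (z k)) atTop (𝓝 y) := by
      refine (tendsto_iff_of_dist ?_).1 hfy
      refine squeeze_zero (fun _ => dist_nonneg) (fun k => ?_) hlim
      rw [dist_comm]
      exact (hz2 k).le
    have hsub : range z ⊆ D := by
      rintro _ ⟨k, rfl⟩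
      exact hzD k
    obtain ⟨F, hF, hFe⟩ := hclosed (range z) hsub
      ⟨insert q (range z), hzq.isCompact_insert_range.isClosed, by
        rw [Set.insert_inter_of_notMem hqD, Set.inter_eq_left.2 hsub]⟩
    have hyF : y ∈ F := by
      refine hF.mem_of_tendsto hfzy (Eventually.of_forall fun k => ?_)
      have : f (z k) ∈ F ∩ f '' D := hFe ▸ ⟨z k, ⟨k, rfl⟩, rfl⟩
      exact this.1
    have : y ∈ f '' range z := by
      rw [hFe]
      exact ⟨hyF, hyD⟩
    obtain ⟨_, ⟨k, rfl⟩, hk⟩ := this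
    exact hz3 k hk
  refine ⟨key, fun y hy => ⟨?_, fun h => Set.disjoint_left.1 key hy (interior_subset h)⟩⟩
  obtain ⟨p, hpD, q, hq, hpq, hfy⟩ := hy
  exact mem_closure_of_tendsto hfy (Eventually.of_forall fun k => ⟨p k, hpD k, rfl⟩)
end

section
/- Let (X, d) be a metric space, let δ > 0, let x₀ ∈ X, and let F ⊆ X be a continuum (a nonempty compact connected set) with diameter d(F) := sup_{x,y ∈ F} d(x, y) ≥ δ. Then there exists a continuum C ⊆ F \ B(x₀, δ/4) with d(C) ≥ δ/4, where B(x₀, δ/4) = { x ∈ X : d(x, x₀) < δ/4 } is the open ball of radius δ/4 about x₀. -/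
open Metric Set

theorem aux_component {X : Type*} [MetricSpace X]
    (r : ℝ) (x₀ : X) (F : Set X) (hFcpt : IsCompact F) (hF : IsPreconnected F)
    (a p : X) (ha : a ∈ F) (hp : p ∈ F) (hpr : dist p x₀ < r) (har : r ≤ dist a x₀) :
    ∃ C : Set X, C ⊆ F \ Metric.ball x₀ r ∧ IsCompact C ∧ IsConnected C ∧ a ∈ C ∧
      ∃ y ∈ C, dist y x₀ ≤ r := by
  have hK : IsCompact (F \ Metric.ball x₀ r) := hFcpt.diff isOpen_ball
  have haK : a ∈ F \ Metric.ball x₀ r := ⟨ha, by simpa using har⟩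
  have : CompactSpace ↥(F \ Metric.ball x₀ r) := isCompact_iff_compactSpace.mp hK
  set a' : ↥(F \ Metric.ball x₀ r) := ⟨a, haK⟩ with ha'
  refine ⟨Subtype.val '' connectedComponent a', ?_, ?_, ?_, ?_, ?_⟩
  · rintro _ ⟨z, -, rfl⟩
    exact z.2
  · exact isClosed_connectedComponent.isCompact.image continuous_subtype_val
  · exact isConnected_connectedComponent.image _ continuous_subtype_val.continuousOn
  · exact ⟨a', mem_connectedComponent, rfl⟩
  by_contra! hcon
  have hW : IsOpen {z : X | r < dist z x₀} :=
    isOpen_lt continuous_const (continuous_id.dist continuous_const)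
  obtain ⟨V, hVc, haV, hVW⟩ : ∃ V : Set ↥(F \ Metric.ball x₀ r),
      IsClopen V ∧ a' ∈ V ∧ ∀ z ∈ V, r < dist (z : X) x₀ := by
    have h1 : ⋂ s : { s : Set ↥(F \ Metric.ball x₀ r) // IsClopen s ∧ a' ∈ s }, s.1 ⊆
        Subtype.val ⁻¹' {z : X | r < dist z x₀} := by
      rw [← connectedComponent_eq_iInter_isClopen]
      intro z hz
      exact hcon z ⟨z, hz, rfl⟩
    haveI : Nonempty { s : Set ↥(F \ Metric.ball x₀ r) // IsClopen s ∧ a' ∈ s } :=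
      ⟨⟨univ, isClopen_univ, mem_univ _⟩⟩
    obtain ⟨s, hs⟩ := exists_subset_nhds_of_compactSpace
      (V := fun s : { s : Set ↥(F \ Metric.ball x₀ r) // IsClopen s ∧ a' ∈ s } => s.1)
      (fun s t => ⟨⟨s.1 ∩ t.1, s.2.1.inter t.2.1, s.2.2, t.2.2⟩,
        inter_subset_left, inter_subset_right⟩) (fun s => s.2.1.1)
      (fun z hz => (hW.preimage continuous_subtype_val).mem_nhds (h1 hz))
    exact ⟨s.1, s.2.1, s.2.2, fun z hz => hs hz⟩
  obtain ⟨O, hO, rfl⟩ := isOpen_induced_iff.mp hVc.2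
  have hVcl : IsClosed (Subtype.val '' (Subtype.val ⁻¹' O : Set ↥(F \ Metric.ball x₀ r))) :=
    (hVc.1.isCompact.image continuous_subtype_val).isClosed
  obtain ⟨z, hzF, ⟨hzO, hzr⟩, hzV⟩ := hF (O ∩ {z : X | r < dist z x₀}) _ (hO.inter hW)
    hVcl.isOpen_compl
    (by
      intro z hz
      by_cases h : z ∈ Subtype.val '' (Subtype.val ⁻¹' O : Set ↥(F \ Metric.ball x₀ r))
      · left
        obtain ⟨w, hw, rfl⟩ := h
        exact ⟨hw, hVW w hw⟩
      · exact Or.inr h)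
    ⟨a, ha, haV, hVW a' haV⟩
    ⟨p, hp, by
      rintro ⟨w, hw, rfl⟩
      exact absurd (hVW w hw) (not_lt.mpr hpr.le)⟩
  have hzr' : r < dist z x₀ := hzr
  exact hzV ⟨⟨z, hzF, by simpa using hzr'.le⟩, hzO, rfl⟩

/-- If `F` is a continuum (nonempty compact connected set) in a metric space
with diameter at least `δ > 0`, then for any point `x₀` there is a continuum
`C ⊆ F \ B(x₀, δ/4)` of diameter at least `δ/4`. -/
theorem exists_subcontinuum_outside_ball {X : Type*} [MetricSpace X]
    (δ : ℝ) (hδ : 0 < δ) (x₀ : X) (F : Set X)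
    (hFne : F.Nonempty) (hFcpt : IsCompact F) (hFconn : IsConnected F)
    (hFdiam : δ ≤ Metric.diam F) :
    ∃ C : Set X, C ⊆ F \ Metric.ball x₀ (δ / 4) ∧ C.Nonempty ∧
      IsCompact C ∧ IsConnected C ∧ δ / 4 ≤ Metric.diam C := by
  by_cases hp : ∃ p ∈ F, dist p x₀ < δ / 4
  · obtain ⟨p, hpF, hp⟩ := hp
    obtain ⟨a, haF, ha⟩ : ∃ a ∈ F, δ / 2 ≤ dist a x₀ := by
      by_contra! h
      obtain ⟨m, hmF, hm⟩ := hFcpt.exists_isMaxOn hFne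
        (f := fun z => dist z x₀) (continuous_id.dist continuous_const).continuousOn
      have hle : Metric.diam F ≤ 2 * dist m x₀ := by
        refine Metric.diam_le_of_forall_dist_le (by positivity) fun x hx y hy => ?_
        have h1 : dist x x₀ ≤ dist m x₀ := hm hx
        have h2 : dist y x₀ ≤ dist m x₀ := hm hy
        linarith [dist_triangle_right x y x₀]
      linarith [h m hmF]
    obtain ⟨C, hCF, hCc, hCconn, haC, y, hyC, hy⟩ := aux_component (δ / 4) x₀ F hFcpt
      hFconn.isPreconnected a p haF hpF hp (by linarith)
    refine ⟨C, hCF, ⟨a, haC⟩, hCc, hCconn, ?_⟩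
    have := Metric.dist_le_diam_of_mem hCc.isBounded haC hyC
    linarith [dist_triangle a y x₀]
  · push Not at hp
    exact ⟨F, fun z hz => ⟨hz, by simpa using hp z hz⟩, hFne, hFcpt, hFconn, by linarith⟩
end
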